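/- Fix integers 0 ≤ d₀ < d and a real number T ≥ 0. Let Γ be a family of continuously differentiable functions Γᵏᵢⱼ : ℝ × ℝᵈ → ℝ (indices i, j, k ∈ {1,…,d}) with Γᵏᵢⱼ = Γᵏⱼᵢ, and suppose that Γᵏᵢⱼ(s, x) = 0 whenever i, j ≤ d₀, k > d₀, s ∈ [0, T] and x̂ = 0. Then there exist an open neighbourhood V of the origin in ℝᵈ and a smooth nonnegative function f : ℝᵈ → ℝ such that: (i) for every x ∈ V one has f(x) = 0 if and only if x̂ = 0; and (ii) for every s ∈ [0, T] and every x ∈ V the symmetric d×d matrix H(s,x) with entries H_{ij}(s,x) = (∂²f/∂x_i∂x_j)(x) − Σ_{k=1}^{d} Γᵏᵢⱼ(s,x) (∂f/∂x_k)(x) is positive semidefinite. -/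

import Mathlib

open scoped BigOperators

noncomputable def quadW {d : ℕ} (w : Fin d → ℝ) (x : EuclideanSpace ℝ (Fin d)) : ℝ :=
  ∑ i, w i * x i ^ 2

theorem quadW_contDiff {d : ℕ} (w : Fin d → ℝ) {n : WithTop ℕ∞} : ContDiff ℝ n (quadW w) := by
  unfold quadW; fun_prop

theorem coord_fderiv {d : ℕ} (k i : Fin d) (x : EuclideanSpace ℝ (Fin d)) :
    fderiv ℝ (fun y : EuclideanSpace ℝ (Fin d) => y k) x (EuclideanSpace.single i 1)
      = if k = i then 1 else 0 := by
  have h : HasFDerivAt (fun y : EuclideanSpace ℝ (Fin d) => y k)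
    (EuclideanSpace.proj k : EuclideanSpace ℝ (Fin d) →L[ℝ] ℝ) x :=
    (EuclideanSpace.proj k : EuclideanSpace ℝ (Fin d) →L[ℝ] ℝ).hasFDerivAt
  rw [h.fderiv]; simp

theorem quadW_fderiv {d : ℕ} (w : Fin d → ℝ) (x : EuclideanSpace ℝ (Fin d)) (k : Fin d) :
    fderiv ℝ (quadW w) x (EuclideanSpace.single k 1) = 2 * w k * x k := by
  unfold quadW
  rw [fderiv_fun_sum (fun i _ => by fun_prop)]
  rw [sum_apply]
  rw [Finset.sum_eq_single k]
  · rw [fderiv_const_mul (by fun_prop), fderiv_fun_pow _ (by fun_prop)]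
    simp [coord_fderiv]; ring
  · intro i _ hi
    rw [fderiv_const_mul (by fun_prop), fderiv_fun_pow _ (by fun_prop)]
    simp [coord_fderiv, hi]
  · simp

noncomputable def convF {d : ℕ} (p q : Fin d → ℝ) (c : ℝ) (x : EuclideanSpace ℝ (Fin d)) : ℝ :=
  1 / 2 * ((c + quadW p x) * quadW q x)

theorem convF_contDiff {d : ℕ} (p q : Fin d → ℝ) (c : ℝ) {n : WithTop ℕ∞} :
    ContDiff ℝ n (convF p q c) := by
  have := quadW_contDiff p (n := n)
  have := quadW_contDiff q (n := n)
  unfold convF; fun_prop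

theorem convF_fderiv {d : ℕ} (p q : Fin d → ℝ) (c : ℝ) (x : EuclideanSpace ℝ (Fin d)) (k : Fin d) :
    fderiv ℝ (convF p q c) x (EuclideanSpace.single k 1) =
      p k * x k * quadW q x + (c + quadW p x) * (q k * x k) := by
  have h1 := (quadW_contDiff p (n := 1)).differentiable (by simp)
  have h2 := (quadW_contDiff q (n := 1)).differentiable (by simp)
  unfold convF
  rw [fderiv_const_mul (by fun_prop), fderiv_fun_mul (by fun_prop) (by fun_prop), fderiv_const_add]
  simp [quadW_fderiv]; ring

theorem convF_hess {d : ℕ} (p q : Fin d → ℝ) (c : ℝ) (x : EuclideanSpace ℝ (Fin d)) (i k : Fin d) :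
    iteratedFDeriv ℝ 2 (convF p q c) x ![EuclideanSpace.single i (1 : ℝ),
              EuclideanSpace.single k (1 : ℝ)] =
      (if k = i then p k * quadW q x + (c + quadW p x) * q k else 0)
      + 2 * (p k * x k) * (q i * x i) + 2 * (p i * x i) * (q k * x k) := by
  have h1 := (quadW_contDiff p (n := 1)).differentiable (by simp)
  have h2 := (quadW_contDiff q (n := 1)).differentiable (by simp)
  have h3 : Differentiable ℝ (fderiv ℝ (convF p q c)) :=
    ((convF_contDiff p q c (n := 2)).fderiv_right (m := 1) (by norm_num)).differentiable (by simp)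
  rw [iteratedFDeriv_two_apply]
  have e : fderiv ℝ (fderiv ℝ (convF p q c)) x (EuclideanSpace.single i 1)
      (EuclideanSpace.single k 1) =
      fderiv ℝ (fun y => fderiv ℝ (convF p q c) y (EuclideanSpace.single k 1)) x
        (EuclideanSpace.single i 1) := by
    rw [fderiv_clm_apply (h3 x) (by fun_prop)]
    simp
  simp only [Matrix.cons_val_zero, Matrix.cons_val_one]
  rw [e]
  simp only [convF_fderiv]
  have m1 : ∀ a : ℝ, fderiv ℝ (fun y : EuclideanSpace ℝ (Fin d) => a * y k) x
      = a • fderiv ℝ (fun y : EuclideanSpace ℝ (Fin d) => y k) x :=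
    fun a => fderiv_const_mul (by fun_prop) a
  rw [fderiv_fun_add (by fun_prop) (by fun_prop),
    fderiv_fun_mul (c := fun y : EuclideanSpace ℝ (Fin d) => p k * y k) (by fun_prop) (by fun_prop),
    fderiv_fun_mul (c := fun y => c + quadW p y) (by fun_prop) (by fun_prop), fderiv_const_add,
    m1, m1]
  simp [quadW_fderiv, coord_fderiv]
  split_ifs <;> ring

theorem hess_sum {d : ℕ} (p q : Fin d → ℝ) (c : ℝ) (x : EuclideanSpace ℝ (Fin d)) (v : Fin d → ℝ) :
   ∑ i, ∑ j, v i * v j * iteratedFDeriv ℝ 2 (convF p q c) x ![EuclideanSpace.single i (1 : ℝ),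
              EuclideanSpace.single j (1 : ℝ)] =
    (∑ i, p i * v i ^ 2) * quadW q x + (c + quadW p x) * (∑ i, q i * v i ^ 2)
     + 4 * (∑ i, p i * x i * v i) * (∑ i, q i * x i * v i) := by
  simp only [convF_hess, mul_add, Finset.sum_add_distrib, mul_ite, mul_zero, Finset.sum_ite_eq',
    Finset.mem_univ, if_true]
  have e1 : ∑ i, ∑ j, v i * v j * (2 * (p j * x j) * (q i * x i)) =
      2 * (∑ i, p i * x i * v i) * (∑ i, q i * x i * v i) := by
    rw [mul_assoc, Finset.sum_mul_sum, Finset.mul_sum, Finset.sum_comm]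
    refine Finset.sum_congr rfl fun i _ => ?_
    rw [Finset.mul_sum]
    refine Finset.sum_congr rfl fun j _ => ?_
    ring
  have e2 : ∑ i, ∑ j, v i * v j * (2 * (p i * x i) * (q j * x j)) =
      2 * (∑ i, p i * x i * v i) * (∑ i, q i * x i * v i) := by
    rw [mul_assoc, Finset.sum_mul_sum, Finset.mul_sum]
    refine Finset.sum_congr rfl fun i _ => ?_
    rw [Finset.mul_sum]
    refine Finset.sum_congr rfl fun j _ => ?_
    ring
  have e3 : ∑ i, v i * v i * (p i * quadW q x) = (∑ i, p i * v i ^ 2) * quadW q x := by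
    rw [Finset.sum_mul]; exact Finset.sum_congr rfl fun i _ => by ring
  have e4 : ∑ i, v i * v i * ((c + quadW p x) * q i) = (c + quadW p x) * ∑ i, q i * v i ^ 2 := by
    rw [Finset.mul_sum]; exact Finset.sum_congr rfl fun i _ => by ring
  rw [e1, e2, e3, e4]; ring

theorem gamma_bound {d : ℕ} (T : ℝ) (G : ℝ × EuclideanSpace ℝ (Fin d) → ℝ) (hG : ContDiff ℝ 1 G) :
    ∃ C : ℝ, 0 ≤ C ∧ ∀ s ∈ Set.Icc (0:ℝ) T, ∀ x y : EuclideanSpace ℝ (Fin d), ‖x‖ ≤ 1 → ‖y‖ ≤ 1 →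
      |G (s, x)| ≤ C ∧ |G (s, x) - G (s, y)| ≤ C * ‖x - y‖ := by
  have hK : IsCompact (Set.Icc (0:ℝ) T ×ˢ Metric.closedBall (0 : EuclideanSpace ℝ (Fin d)) 1) :=
    isCompact_Icc.prod (isCompact_closedBall _ _)
  have hc : Convex ℝ (Set.Icc (0:ℝ) T ×ˢ Metric.closedBall (0 : EuclideanSpace ℝ (Fin d)) 1) :=
    (convex_Icc _ _).prod (convex_closedBall _ _)
  obtain ⟨C1, h1⟩ := hK.exists_bound_of_continuousOn (f := G) hG.continuous.continuousOn
  obtain ⟨C2, h2⟩ := hK.exists_bound_of_continuousOn (f := fderiv ℝ G)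
    (hG.continuous_fderiv (by simp)).continuousOn
  refine ⟨max 0 (max C1 C2), le_max_left _ _, fun s hs x y hx hy => ⟨?_, ?_⟩⟩
  · exact (h1 (s, x) ⟨hs, by simpa using hx⟩).trans ((le_max_left _ _).trans (le_max_right _ _))
  · have := hc.norm_image_sub_le_of_norm_fderiv_le (𝕜 := ℝ) (f := G) (C := C2)
      (fun z _ => hG.differentiable (by simp) z) h2 (x := (s, y)) (y := (s, x))
      ⟨hs, by simpa using hy⟩ ⟨hs, by simpa using hx⟩
    have e : ‖((s, x) : ℝ × EuclideanSpace ℝ (Fin d)) - (s, y)‖ = ‖x - y‖ := by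
      simp [Prod.norm_def]
    rw [e] at this
    exact this.trans (mul_le_mul_of_nonneg_right
      ((le_max_right _ _).trans (le_max_right _ _)) (norm_nonneg _))

theorem real_ineq (D ε r A X U W S : ℝ) (hD : 1 ≤ D) (hε : 0 < ε) (h : D * ε = 1 / 16)
    (hr : r = ε / 32) (hA : ε ^ 2 ≤ A) (hA2 : A ≤ ε ^ 2 + r ^ 2) (hX : 0 ≤ X) (hXr : X ≤ r)
    (hU : 0 ≤ U) (hW : 0 ≤ W) 
    (hS : S ≤ 4 * r * X * U * W + 
      D * (2 * r * X ^ 2 * (U ^ 2 + W ^ 2) + A * X * (X * U ^ 2 + U * W + W ^ 2))) :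
    S ≤ U ^ 2 * X ^ 2 + A * W ^ 2 := by
  have hr0 : 0 < r := by rw [hr]; positivity
  have hA2' : A ≤ 2 * ε ^ 2 := by rw [hr] at hA2; nlinarith
  have hA0 : 0 < A := by nlinarith
  have hDr : D * r ≤ 1 / 16 := by rw [hr]; nlinarith
  have hDA : D * A ≤ ε / 8 := by nlinarith
  have hε1 : ε ≤ 1 / 16 := by nlinarith
  have t1 : D * r * (X ^ 2 * U ^ 2) ≤ 1 / 16 * (X ^ 2 * U ^ 2) :=
    mul_le_mul_of_nonneg_right hDr (by positivity)
  have hX2 : X ^ 2 ≤ A := by nlinarith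
  have t2 : D * r * (X ^ 2 * W ^ 2) ≤ 1 / 16 * (A * W ^ 2) := by
    apply mul_le_mul hDr _ (by positivity) (by norm_num)
    exact mul_le_mul_of_nonneg_right hX2 (by positivity)
  have t3 : D * A * (X ^ 2 * U ^ 2) ≤ 1 / 8 * (X ^ 2 * U ^ 2) :=
    mul_le_mul_of_nonneg_right (by linarith) (by positivity)
  have t4 : D * X * (A * W ^ 2) ≤ 1 / 16 * (A * W ^ 2) := 
    mul_le_mul_of_nonneg_right (by nlinarith) (by positivity)
  have t5 : (4 * r + D * A) * (X * U * W) ≤ ε / 4 * (X * U * W) :=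
    mul_le_mul_of_nonneg_right (by linarith) (by positivity)
  have t6 : ε * (X * U * W) ≤ 1 / 2 * (X ^ 2 * U ^ 2 + ε ^ 2 * W ^ 2) := by
    nlinarith [sq_nonneg (X * U - ε * W)]
  have t7 : ε ^ 2 * W ^ 2 ≤ A * W ^ 2 := mul_le_mul_of_nonneg_right hA (by positivity)
  have t8 : 0 ≤ X ^ 2 * U ^ 2 := by positivity
  have t9 : 0 ≤ A * W ^ 2 := by positivity
  nlinarith

theorem abs_le_sqrt_sum {d : ℕ} (p : Fin d → ℝ) (hp : ∀ i, 0 ≤ p i) (v : Fin d → ℝ) (i : Fin d)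
    (h : p i = 1) : |v i| ≤ √(∑ i, p i * v i ^ 2) := by
  apply Real.abs_le_sqrt
  have := Finset.single_le_sum (f := fun i => p i * v i ^ 2)
    (fun i _ => mul_nonneg (hp i) (sq_nonneg _)) (Finset.mem_univ i)
  simpa [h] using this

theorem cs_weight {d : ℕ} (p : Fin d → ℝ) (hp : ∀ i, p i = 0 ∨ p i = 1) (x v : Fin d → ℝ) :
    |∑ i, p i * x i * v i| ≤ √(∑ i, p i * x i ^ 2) * √(∑ i, p i * v i ^ 2) := by
  rw [← Real.sqrt_mul]
  · apply Real.abs_le_sqrt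
    have := Finset.sum_mul_sq_le_sq_mul_sq Finset.univ (fun i => p i * x i) (fun i => p i * v i)
    have e1 : ∀ i, p i * x i * (p i * v i) = p i * x i * v i := fun i => by
      rcases hp i with h | h <;> simp [h]
    have e2 : ∀ (y : Fin d → ℝ) i, (p i * y i) ^ 2 = p i * y i ^ 2 := fun y i => by
      rcases hp i with h | h <;> simp [h]
    simpa only [e1, e2] using this
  · exact Finset.sum_nonneg fun i _ => by rcases hp i with h | h <;> simp [h, sq_nonneg]

/-- bound of a single Christoffel term -/
theorem term_bound (C r A X U W vi vj g y : ℝ) (hC : 0 ≤ C) (hr : 0 ≤ r) (hA : 0 ≤ A) (hX : 0 ≤ X)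
    (hU : 0 ≤ U) (hW : 0 ≤ W) (pi pj pk : Prop) (hg : |g| ≤ C)
    (hg0 : pi → pj → ¬ pk → |g| ≤ C * X)
    (hi : pi → |vi| ≤ U) (hi' : ¬ pi → |vi| ≤ W)
    (hj : pj → |vj| ≤ U) (hj' : ¬ pj → |vj| ≤ W)
    (hy : pk → |y| ≤ r * X ^ 2) (hy' : ¬ pk → |y| ≤ A * X) :
    vi * vj * (g * y) ≤ C * (2 * r * X ^ 2 * (U ^ 2 + W ^ 2)
      + A * X * (X * U ^ 2 + U * W + W ^ 2)) := by
  refine (le_abs_self _).trans ?_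
  rw [abs_mul, abs_mul, abs_mul]
  have hUW := mul_nonneg hU hW
  have hAX := mul_nonneg hA hX
  by_cases hk : pk
  · have h1 : |vi| ≤ U + W := by
      by_cases h : pi
      · linarith [hi h]
      · linarith [hi' h]
    have h2 : |vj| ≤ U + W := by
      by_cases h : pj
      · linarith [hj h]
      · linarith [hj' h]
    have h3 : |vi| * |vj| * (|g| * |y|) ≤ (U + W) * (U + W) * (C * (r * X ^ 2)) := by
      gcongr
      exact hy hk
    have h4 : (U + W) * (U + W) ≤ 2 * (U ^ 2 + W ^ 2) := by nlinarith [sq_nonneg (U - W)]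
    have h5 : (U + W) * (U + W) * (C * (r * X ^ 2)) ≤ 2 * (U ^ 2 + W ^ 2) * (C * (r * X ^ 2)) :=
      mul_le_mul_of_nonneg_right h4 (by positivity)
    have h6 : 0 ≤ C * (A * X * (X * U ^ 2 + U * W + W ^ 2)) := by positivity
    nlinarith
  · have hyk := hy' hk
    have h6 : 0 ≤ C * (2 * r * X ^ 2 * (U ^ 2 + W ^ 2)) := by positivity
    have b1 : 0 ≤ C * (A * X) * (X * U ^ 2) := by positivity
    have b2 : 0 ≤ C * (A * X) * (U * W) := by positivity
    have b3 : 0 ≤ C * (A * X) * (W ^ 2) := by positivity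
    by_cases h1 : pi
    · by_cases h2 : pj
      · have h3 : |vi| * |vj| * (|g| * |y|) ≤ U * U * (C * X * (A * X)) := by
          gcongr
          · exact hi h1
          · exact hj h2
          · exact hg0 h1 h2 hk
        nlinarith
      · have h3 : |vi| * |vj| * (|g| * |y|) ≤ U * W * (C * (A * X)) := by
          gcongr
          · exact hi h1
          · exact hj' h2
        nlinarith
    · by_cases h2 : pj
      · have h3 : |vi| * |vj| * (|g| * |y|) ≤ W * U * (C * (A * X)) := by
          gcongr
          · exact hi' h1
          · exact hj h2
        nlinarith
      · have h3 : |vi| * |vj| * (|g| * |y|) ≤ W * W * (C * (A * X)) := by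
          gcongr
          · exact hi' h1
          · exact hj' h2
        nlinarith

/-- Coordinate form of Proposition 7.1: given `C¹` Christoffel symbols `Γ k i j` on
`ℝ × ℝᵈ`, symmetric in `i, j`, which vanish on `[0,T] × {x̂ = 0}` for `i, j < d₀ ≤ k`
(total geodesy of `M₀ = {x̂ = 0}`), there are an open neighbourhood `V` of the origin and a
smooth nonnegative function `f` vanishing on `V` exactly on `{x̂ = 0}` whose `∇(s)`-Hessian
matrix `H(s,x)ᵢⱼ = ∂²f/∂xᵢ∂xⱼ (x) − Σₖ Γᵏᵢⱼ(s,x) ∂f/∂xₖ (x)` is positive semidefinite for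
all `s ∈ [0,T]` and `x ∈ V`. -/
theorem exists_convex_function_of_totally_geodesic
    (d₀ d : ℕ) (hd : d₀ < d) (T : ℝ) (hT : 0 ≤ T)
    (Γ : Fin d → Fin d → Fin d → ℝ × EuclideanSpace ℝ (Fin d) → ℝ)
    (hΓreg : ∀ k i j, ContDiff ℝ 1 (Γ k i j))
    (hΓsymm : ∀ k i j, Γ k i j = Γ k j i)
    (hΓ0 : ∀ (k i j : Fin d), (i : ℕ) < d₀ → (j : ℕ) < d₀ → d₀ ≤ (k : ℕ) →
      ∀ s ∈ Set.Icc (0 : ℝ) T, ∀ x : EuclideanSpace ℝ (Fin d),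
        (∀ l : Fin d, d₀ ≤ (l : ℕ) → x l = 0) → Γ k i j (s, x) = 0) :
    ∃ (V : Set (EuclideanSpace ℝ (Fin d))) (f : EuclideanSpace ℝ (Fin d) → ℝ),
      IsOpen V ∧ (0 : EuclideanSpace ℝ (Fin d)) ∈ V ∧
      ContDiff ℝ (⊤ : ℕ∞) f ∧ (∀ x, 0 ≤ f x) ∧
      (∀ x ∈ V, (f x = 0 ↔ ∀ i : Fin d, d₀ ≤ (i : ℕ) → x i = 0)) ∧
      (∀ s ∈ Set.Icc (0 : ℝ) T, ∀ x ∈ V,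
        (Matrix.of fun i j : Fin d =>
          iteratedFDeriv ℝ 2 f x ![EuclideanSpace.single i (1 : ℝ),
              EuclideanSpace.single j (1 : ℝ)]
            - ∑ k : Fin d, Γ k i j (s, x) *
                fderiv ℝ f x (EuclideanSpace.single k (1 : ℝ))).PosSemidef) := by
  classical
  choose C0 hC0 hC0b using fun k i j => gamma_bound T (Γ k i j) (hΓreg k i j)
  set C : ℝ := 1 + ∑ k, ∑ i, ∑ j, C0 k i j with hCdef
  have hCle : ∀ k i j, C0 k i j ≤ C := by
    intro k i j
    have a1 : C0 k i j ≤ ∑ j, C0 k i j :=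
      Finset.single_le_sum (f := fun j => C0 k i j) (fun j _ => hC0 k i j) (Finset.mem_univ j)
    have a2 : ∑ j, C0 k i j ≤ ∑ i, ∑ j, C0 k i j :=
      Finset.single_le_sum (f := fun i => ∑ j, C0 k i j)
        (fun i _ => Finset.sum_nonneg fun j _ => hC0 k i j) (Finset.mem_univ i)
    have a3 : ∑ i, ∑ j, C0 k i j ≤ ∑ k, ∑ i, ∑ j, C0 k i j :=
      Finset.single_le_sum (f := fun k => ∑ i, ∑ j, C0 k i j)
        (fun k _ => Finset.sum_nonneg fun i _ => Finset.sum_nonneg fun j _ => hC0 k i j)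
        (Finset.mem_univ k)
    linarith
  have hC1 : 1 ≤ C := by
    have : 0 ≤ ∑ k, ∑ i, ∑ j, C0 k i j :=
      Finset.sum_nonneg fun k _ => Finset.sum_nonneg fun i _ => Finset.sum_nonneg fun j _ =>
        hC0 k i j
    linarith
  set D : ℝ := (d : ℝ) ^ 3 * C with hDdef
  have hd1 : (1 : ℝ) ≤ d := by exact_mod_cast (by omega : 1 ≤ d)
  have hD1 : 1 ≤ D := by
    have : (1 : ℝ) ≤ (d : ℝ) ^ 3 := one_le_pow₀ hd1
    nlinarith
  obtain ⟨ε, hεdef⟩ : ∃ ε : ℝ, ε = 1 / (16 * D) := ⟨_, rfl⟩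
  have hε : 0 < ε := by rw [hεdef]; positivity
  have hDε : D * ε = 1 / 16 := by rw [hεdef]; field_simp
  obtain ⟨r, hr⟩ : ∃ r : ℝ, r = ε / 32 := ⟨_, rfl⟩
  have hr0 : 0 < r := by rw [hr]; positivity
  have hr1 : r ≤ 1 := by rw [hr]; nlinarith
  let p : Fin d → ℝ := fun i => if (i : ℕ) < d₀ then 1 else 0
  let q : Fin d → ℝ := fun i => if (i : ℕ) < d₀ then 0 else 1
  have hp : ∀ i, p i = 0 ∨ p i = 1 := fun i => by
    by_cases h : (i : ℕ) < d₀ <;> simp [p, h]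
  have hq : ∀ i, q i = 0 ∨ q i = 1 := fun i => by
    by_cases h : (i : ℕ) < d₀ <;> simp [q, h]
  have hp0 : ∀ i, 0 ≤ p i := fun i => by rcases hp i with h | h <;> simp [h]
  have hq0 : ∀ i, 0 ≤ q i := fun i => by rcases hq i with h | h <;> simp [h]
  have hP : ∀ x, 0 ≤ quadW p x := fun x =>
    Finset.sum_nonneg fun i _ => mul_nonneg (hp0 i) (sq_nonneg _)
  have hQ : ∀ x, 0 ≤ quadW q x := fun x =>
    Finset.sum_nonneg fun i _ => mul_nonneg (hq0 i) (sq_nonneg _)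
  have hPQ : ∀ x, quadW p x + quadW q x = ‖x‖ ^ 2 := fun x => by
    rw [EuclideanSpace.real_norm_sq_eq, quadW, quadW, ← Finset.sum_add_distrib]
    refine Finset.sum_congr rfl fun i _ => ?_
    by_cases h : (i : ℕ) < d₀ <;> simp [p, q, h]
  refine ⟨Metric.ball 0 r, convF p q (ε ^ 2), Metric.isOpen_ball, Metric.mem_ball_self hr0,
    convF_contDiff _ _ _, ?_, ?_, ?_⟩
  · intro x
    have := hP x
    have := hQ x
    unfold convF; positivity
  · intro x _
    have h1 : 0 < ε ^ 2 + quadW p x := by have := hP x; positivity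
    have h2 : convF p q (ε ^ 2) x = 0 ↔ quadW q x = 0 := by
      unfold convF; simp [h1.ne']
    rw [h2, quadW, Finset.sum_eq_zero_iff_of_nonneg
      fun i _ => mul_nonneg (hq0 i) (sq_nonneg _)]
    refine forall_congr' fun i => ?_
    by_cases h : (i : ℕ) < d₀
    · simp [q, h]
    · simp [q, h, not_lt.mp h]
  · intro s hs x hx
    have hxr : ‖x‖ < r := by simpa using hx
    apply Matrix.PosSemidef.of_dotProduct_mulVec_nonneg
    · ext i j
      simp only [Matrix.conjTranspose_apply, Matrix.of_apply, star_trivial, convF_hess]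
      have e : ∀ k, Γ k j i = Γ k i j := fun k => hΓsymm k j i
      simp only [e]
      by_cases h : i = j
      · subst h; rfl
      · have h' : ¬ j = i := fun h' => h h'.symm
        simp only [h, h', if_false]; ring
    · intro v
      have hform : star v ⬝ᵥ ((Matrix.of fun i j : Fin d =>
          iteratedFDeriv ℝ 2 (convF p q (ε ^ 2)) x ![EuclideanSpace.single i (1 : ℝ),
              EuclideanSpace.single j (1 : ℝ)]
            - ∑ k : Fin d, Γ k i j (s, x) *
                fderiv ℝ (convF p q (ε ^ 2)) x (EuclideanSpace.single k (1 : ℝ))).mulVec v)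
        = (∑ i, ∑ j, v i * v j * iteratedFDeriv ℝ 2 (convF p q (ε ^ 2)) x
            ![EuclideanSpace.single i (1 : ℝ), EuclideanSpace.single j (1 : ℝ)])
          - ∑ i, ∑ j, ∑ k, v i * v j * (Γ k i j (s, x) *
                fderiv ℝ (convF p q (ε ^ 2)) x (EuclideanSpace.single k (1 : ℝ))) := by
        simp only [dotProduct, Matrix.mulVec, Matrix.of_apply, star_trivial,
          ← Finset.sum_sub_distrib, ← Finset.mul_sum]
        refine Finset.sum_congr rfl fun i _ => ?_
        rw [Finset.mul_sum]
        refine Finset.sum_congr rfl fun j _ => ?_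
        ring
      rw [hform, hess_sum]
      set X := √(quadW q x) with hXdef
      set U := √(∑ i, p i * v i ^ 2) with hUdef
      set W := √(∑ i, q i * v i ^ 2) with hWdef
      have hX0 : 0 ≤ X := Real.sqrt_nonneg _
      have hU0 : 0 ≤ U := Real.sqrt_nonneg _
      have hW0 : 0 ≤ W := Real.sqrt_nonneg _
      have hX2 : quadW q x = X ^ 2 := (Real.sq_sqrt (hQ x)).symm
      have hU2 : ∑ i, p i * v i ^ 2 = U ^ 2 :=
        (Real.sq_sqrt (Finset.sum_nonneg fun i _ => mul_nonneg (hp0 i) (sq_nonneg _))).symm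
      have hW2 : ∑ i, q i * v i ^ 2 = W ^ 2 :=
        (Real.sq_sqrt (Finset.sum_nonneg fun i _ => mul_nonneg (hq0 i) (sq_nonneg _))).symm
      have hx2 : ‖x‖ ^ 2 ≤ r ^ 2 := by gcongr
      have hPr : √(quadW p x) ≤ r := by
        apply Real.sqrt_le_iff.mpr
        exact ⟨hr0.le, by linarith [hPQ x, hQ x]⟩
      have hXr : X ≤ r := by
        apply Real.sqrt_le_iff.mpr
        exact ⟨hr0.le, by linarith [hPQ x, hP x]⟩
      have hcs1 : |∑ i, p i * x i * v i| ≤ r * U :=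
        (cs_weight p hp x v).trans (mul_le_mul_of_nonneg_right hPr hU0)
      have hcs2 : |∑ i, q i * x i * v i| ≤ X * W := cs_weight q hq x v
      obtain ⟨A, hA⟩ : ∃ A : ℝ, A = ε ^ 2 + quadW p x := ⟨_, rfl⟩
      have hA1 : ε ^ 2 ≤ A := by linarith [hP x]
      have hA2 : A ≤ ε ^ 2 + r ^ 2 := by linarith [hPQ x, hQ x]
      have hA0 : 0 ≤ A := (sq_nonneg ε).trans hA1
      have hterm : ∀ i j k, v i * v j * (Γ k i j (s, x) *
          fderiv ℝ (convF p q (ε ^ 2)) x (EuclideanSpace.single k (1 : ℝ))) ≤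
          C * (2 * r * X ^ 2 * (U ^ 2 + W ^ 2) + A * X * (X * U ^ 2 + U * W + W ^ 2)) := by
        intro i j k
        rw [convF_fderiv, ← hA, hX2]
        have hx1 : ‖x‖ ≤ 1 := by linarith
        have vU : ∀ i : Fin d, (i : ℕ) < d₀ → |v i| ≤ U := fun i h =>
          abs_le_sqrt_sum p hp0 v i (by simp [p, h])
        have vW : ∀ i : Fin d, ¬ (i : ℕ) < d₀ → |v i| ≤ W := fun i h =>
          abs_le_sqrt_sum q hq0 v i (by simp [q, h])
        refine term_bound C r A X U W _ _ _ _ (by linarith) hr0.le hA0 hX0 hU0 hW0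
          ((i : ℕ) < d₀) ((j : ℕ) < d₀) ((k : ℕ) < d₀) ?_ ?_ (vU i) (vW i) (vU j) (vW j) ?_ ?_
        · exact (hC0b k i j s hs x x hx1 hx1).1.trans (hCle k i j)
        · intro hi hj hk
          let y : EuclideanSpace ℝ (Fin d) := WithLp.toLp 2 fun l => p l * x l
          have hy0 : Γ k i j (s, y) = 0 := by
            refine hΓ0 k i j hi hj (not_lt.mp hk) s hs y fun l hl => ?_
            simp [y, p, not_lt.mpr hl]
          have hyP : ‖y‖ ^ 2 = quadW p x := by
            rw [EuclideanSpace.real_norm_sq_eq, quadW]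
            refine Finset.sum_congr rfl fun l _ => ?_
            by_cases h : (l : ℕ) < d₀ <;> simp [y, p, h]
          have hxy : ‖x - y‖ ^ 2 = X ^ 2 := by
            rw [EuclideanSpace.real_norm_sq_eq, ← hX2, quadW]
            refine Finset.sum_congr rfl fun l _ => ?_
            by_cases h : (l : ℕ) < d₀ <;> simp [y, p, q, h]
          have hy1 : ‖y‖ ≤ 1 := by
            have : ‖y‖ ^ 2 ≤ r ^ 2 := by linarith [hPQ x, hQ x]
            exact (abs_le_of_sq_le_sq' this hr0.le).2.trans hr1
          have hxyX : ‖x - y‖ = X := by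
            rwa [sq_eq_sq₀ (norm_nonneg _) hX0] at hxy
          have := (hC0b k i j s hs x y hx1 hy1).2
          rw [hy0, sub_zero, hxyX] at this
          exact this.trans (mul_le_mul_of_nonneg_right (hCle k i j) hX0)
        · intro hk
          have h1 : |x k| ≤ √(quadW p x) := abs_le_sqrt_sum p hp0 x k (by simp [p, hk])
          simp only [p, q, hk, if_true, one_mul, zero_mul, mul_zero, add_zero]
          rw [abs_mul, abs_of_nonneg (sq_nonneg X)]
          exact mul_le_mul_of_nonneg_right (h1.trans hPr) (sq_nonneg X)
        · intro hk
          have h1 : |x k| ≤ X := abs_le_sqrt_sum q hq0 x k (by simp [q, hk])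
          simp only [p, q, hk, if_false, one_mul, zero_mul, zero_add]
          rw [abs_mul, abs_of_nonneg hA0]
          exact mul_le_mul_of_nonneg_left h1 hA0
      have hsum : ∑ i, ∑ j, ∑ k, v i * v j * (Γ k i j (s, x) *
                fderiv ℝ (convF p q (ε ^ 2)) x (EuclideanSpace.single k (1 : ℝ))) ≤
          D * (2 * r * X ^ 2 * (U ^ 2 + W ^ 2) + A * X * (X * U ^ 2 + U * W + W ^ 2)) := by
        refine (Finset.sum_le_sum fun i _ => Finset.sum_le_sum fun j _ =>
          Finset.sum_le_sum fun k _ => hterm i j k).trans (le_of_eq ?_)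
        simp only [Finset.sum_const, Finset.card_univ, Fintype.card_fin, nsmul_eq_mul]
        rw [hDdef]; ring
      have hcross : -(4 * (∑ i, p i * x i * v i) * (∑ i, q i * x i * v i))
          ≤ 4 * r * X * U * W := by
        have h1 : |∑ i, p i * x i * v i| * |∑ i, q i * x i * v i| ≤ r * U * (X * W) := by
          gcongr
        rw [← abs_mul] at h1
        have h2 := neg_abs_le ((∑ i, p i * x i * v i) * (∑ i, q i * x i * v i))
        nlinarith
      have := real_ineq D ε r A X U W _ hD1 hε hDε hr hA1 hA2 hX0 hXr hU0 hW0
        (add_le_add hcross hsum)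
      rw [hU2, hW2, hX2, ← hA]
      linarith
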